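/- arXiv:2512.14497 — 3 statements merged into one kernel-verified Lean document; each statement's English description precedes it below -/
import Mathlib

section
/- (Theorem 3) Let n ≤ m, let (α_k)_{k∈Fin n} be an orthonormal basis of ℂ^n, (β_k)_{k∈Fin n} an orthonormal family in ℂ^m, λ : Fin n → ℝ with λ_k ≥ 0 and ∑_k λ_k = 1, and ψ := ∑_k √λ_k (α_k ⊗ β_k). Let H := A ⊗ I_m + I_n ⊗ B with A an n×n and B an m×m Hermitian matrix, and let Π be the measurement channel with projectors P_k := |α_k⟩⟨α_k|. Then ξ(|ψ⟩⟨ψ|,H) − ξ(Π(|ψ⟩⟨ψ|),H) = ∑_{k=1}^{nm} ε_k^↑ μ_k^↓ − ε_min ≥ 0, where μ^↓ is the nonincreasing rearrangement of λ padded with nm − n zeros, ε_1^↑ ≤ … ≤ ε_{nm}^↑ are the eigenvalues of H in nondecreasing order with multiplicity, and ε_min = ε_1^↑. -/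
open scoped BigOperators ComplexOrder
open Matrix Kronecker

/-- Nondecreasing rearrangement of a finite real-valued family. -/
noncomputable def sortUp {ι : Type*} [Fintype ι] (f : ι → ℝ) : Fin (Fintype.card ι) → ℝ :=
  (f ∘ (Fintype.equivFin ι).symm) ∘ Tuple.sort (f ∘ (Fintype.equivFin ι).symm)

/-- Nonincreasing rearrangement of a finite real-valued family. -/
noncomputable def sortDown {ι : Type*} [Fintype ι] (f : ι → ℝ) : Fin (Fintype.card ι) → ℝ :=
  fun i => sortUp f i.rev

/-- Ergotropy ξ(ρ,H) = Tr(ρH) − inf over unitaries V of Tr(V ρ V* H). -/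
noncomputable def ergotropy {ι : Type*} [Fintype ι] [DecidableEq ι] (ρ H : Matrix ι ι ℂ) : ℝ :=
  ((ρ * H).trace).re -
    ⨅ V : Matrix.unitaryGroup ι ℂ,
      (((V : Matrix ι ι ℂ) * ρ * star (V : Matrix ι ι ℂ) * H).trace).re

/-- Passive energy E_p(ρ,H) = ∑ λ_i^↓ ε_i^↑. -/
noncomputable def passiveEnergy {ι : Type*} [Fintype ι] [DecidableEq ι]
    {ρ H : Matrix ι ι ℂ} (hρ : ρ.IsHermitian) (hH : H.IsHermitian) : ℝ :=
  ∑ i, sortDown hρ.eigenvalues i * sortUp hH.eigenvalues i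

/-- |u⟩⟨u|, the matrix with entries u_i conj(u_j). -/
noncomputable def ketbra {ι : Type*} (u : ι → ℂ) : Matrix ι ι ℂ := Matrix.vecMulVec u (star u)

/-- Tensor (Kronecker) product of vectors: (u ⊗ v)_(i,j) = u_i v_j. -/
noncomputable def vecTensor {ιa ιb : Type*} (u : ιa → ℂ) (v : ιb → ℂ) : ιa × ιb → ℂ :=
  fun p => u p.1 * v p.2

/-- The local measurement channel Π(ρ) = ∑_k (P_k ⊗ I) ρ (P_k ⊗ I). -/
noncomputable def pinch {ιa ιb K : Type*} [Fintype ιa] [Fintype ιb] [Fintype K]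
    [DecidableEq ιa] [DecidableEq ιb]
    (P : K → Matrix ιa ιa ℂ) (ρ : Matrix (ιa × ιb) (ιa × ιb) ℂ) :
    Matrix (ιa × ιb) (ιa × ιb) ℂ :=
  ∑ k, (P k ⊗ₖ (1 : Matrix ιb ιb ℂ)) * ρ * (P k ⊗ₖ (1 : Matrix ιb ιb ℂ))

/-- Local ergotropy ξ^l(ρ,H) = Tr(ρH) − inf over local unitaries U⊗V of Tr((U⊗V) ρ (U⊗V)* H). -/
noncomputable def localErgotropy {n m : ℕ}
    (ρ H : Matrix (Fin n × Fin m) (Fin n × Fin m) ℂ) : ℝ :=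
  ((ρ * H).trace).re -
    ⨅ W : Matrix.unitaryGroup (Fin n) ℂ × Matrix.unitaryGroup (Fin m) ℂ,
      ((((W.1 : Matrix (Fin n) (Fin n) ℂ) ⊗ₖ (W.2 : Matrix (Fin m) (Fin m) ℂ)) * ρ *
        star ((W.1 : Matrix (Fin n) (Fin n) ℂ) ⊗ₖ (W.2 : Matrix (Fin m) (Fin m) ℂ)) * H).trace).re

/-- First marginal (partial trace over the second factor). -/
noncomputable def marginalA {n m : ℕ} (ρ : Matrix (Fin n × Fin m) (Fin n × Fin m) ℂ) :
    Matrix (Fin n) (Fin n) ℂ :=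
  Matrix.of fun i i' => ∑ j, ρ (i, j) (i', j)

/-- Second marginal (partial trace over the first factor). -/
noncomputable def marginalB {n m : ℕ} (ρ : Matrix (Fin n × Fin m) (Fin n × Fin m) ℂ) :
    Matrix (Fin m) (Fin m) ℂ :=
  Matrix.of fun j j' => ∑ i, ρ (i, j) (i, j')


theorem aux_ext_unitary {ι : Type*} [Fintype ι] [DecidableEq ι] (v : ι → ι → ℂ) (s : Set ι)
    (hv : ∀ i ∈ s, ∀ j ∈ s, star (v i) ⬝ᵥ v j = if i = j then 1 else 0) :
    ∃ U : Matrix.unitaryGroup ι ℂ, ∀ i ∈ s, ∀ x, (U : Matrix ι ι ℂ) x i = v i x := by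
  have ho : Orthonormal ℂ (s.domRestrict (fun i => (WithLp.toLp 2 (v i) : EuclideanSpace ℂ ι))) := by
    rw [orthonormal_iff_ite]
    rintro ⟨i, hi⟩ ⟨j, hj⟩
    have := hv i hi j hj
    simp only [Set.domRestrict_apply, EuclideanSpace.inner_toLp_toLp, Subtype.mk.injEq]
    rw [dotProduct_comm, this]
  obtain ⟨b, hb⟩ := ho.exists_orthonormalBasis_extension_of_card_eq (by simp)
  refine ⟨⟨Matrix.of fun x i => b i x, ?_⟩, ?_⟩
  · rw [Matrix.mem_unitaryGroup_iff']
    ext i j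
    have := orthonormal_iff_ite.mp b.orthonormal i j
    rw [PiLp.inner_apply] at this
    simp only [Matrix.mul_apply, Matrix.star_apply, Matrix.of_apply, Matrix.one_apply]
    rw [← this]
    refine Finset.sum_congr rfl fun x _ => ?_
    simp [mul_comm]
  · intro i hi x
    simp [hb i hi]

theorem aux_diag_sum {ι : Type*} [Fintype ι] [DecidableEq ι] (U : Matrix ι ι ℂ) (d : ι → ℂ) :
    U * Matrix.diagonal d * star U = ∑ p, d p • ketbra (fun x => U x p) := by
  ext i j
  rw [Matrix.mul_apply]
  simp only [Matrix.mul_diagonal, Matrix.star_apply, Matrix.sum_apply,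
    Matrix.smul_apply, ketbra, Matrix.vecMulVec_apply, Pi.star_apply, smul_eq_mul]
  exact Finset.sum_congr rfl fun p _ => by ring

theorem aux_trace {ι : Type*} [Fintype ι] [DecidableEq ι] (Q : Matrix ι ι ℂ) (d e : ι → ℝ) :
    ((Q * Matrix.diagonal (fun i => (d i : ℂ)) * star Q *
      Matrix.diagonal (fun i => (e i : ℂ))).trace).re
      = ∑ i, ∑ j, Complex.normSq (Q i j) * (e i * d j) := by
  simp only [Matrix.trace, Matrix.diag_apply, Matrix.mul_diagonal]
  rw [Complex.re_sum]
  refine Finset.sum_congr rfl fun i _ => ?_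
  rw [Matrix.mul_apply, Finset.sum_mul, Complex.re_sum]
  refine Finset.sum_congr rfl fun j _ => ?_
  rw [Matrix.mul_diagonal, Matrix.star_apply]
  have : Q i j * (d j : ℂ) * star (Q i j) * (e i : ℂ)
      = ((Complex.normSq (Q i j) * (e i * d j) : ℝ) : ℂ) := by
    push_cast
    rw [Complex.normSq_eq_conj_mul_self]
    simp only [Complex.star_def]
    ring
  rw [this, Complex.ofReal_re]

theorem aux_ds {ι : Type*} [Fintype ι] [DecidableEq ι] (Q : Matrix.unitaryGroup ι ℂ) :
    (Matrix.of fun i j => Complex.normSq ((Q : Matrix ι ι ℂ) i j)) ∈ doublyStochastic ℝ ι := by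
  rw [mem_doublyStochastic_iff_sum]
  refine ⟨fun i j => Complex.normSq_nonneg _, fun i => ?_, fun j => ?_⟩
  · have h := congrFun (congrFun (Matrix.mem_unitaryGroup_iff.mp Q.2) i) i
    rw [Matrix.mul_apply, Matrix.one_apply_eq] at h
    apply Complex.ofReal_injective
    push_cast
    rw [← h]
    refine Finset.sum_congr rfl fun x _ => ?_
    simp [Matrix.star_apply, Complex.mul_conj]
  · have h := congrFun (congrFun (Matrix.mem_unitaryGroup_iff'.mp Q.2) j) j
    rw [Matrix.mul_apply, Matrix.one_apply_eq] at h
    apply Complex.ofReal_injective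
    push_cast
    rw [← h]
    refine Finset.sum_congr rfl fun x _ => ?_
    simp [Matrix.star_apply, Complex.normSq_eq_conj_mul_self]

theorem aux_perm_sum {ι : Type*} [Fintype ι] [DecidableEq ι] (σ : Equiv.Perm ι) (d e : ι → ℝ) :
    ∑ i, ∑ j, σ.permMatrix ℝ i j * (e i * d j) = ∑ i, e i * d (σ i) := by
  refine Finset.sum_congr rfl fun i _ => ?_
  simp [PEquiv.toMatrix_apply, Equiv.toPEquiv_apply]

theorem aux_ds_bound {ι : Type*} [Fintype ι] [DecidableEq ι] (d e : ι → ℝ) (c : ℝ)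
    (hc : ∀ σ : Equiv.Perm ι, c ≤ ∑ i, e i * d (σ i))
    (M : Matrix ι ι ℝ) (hM : M ∈ doublyStochastic ℝ ι) :
    c ≤ ∑ i, ∑ j, M i j * (e i * d j) := by
  have hM' : M ∈ (doublyStochastic ℝ ι : Set (Matrix ι ι ℝ)) := hM
  rw [doublyStochastic_eq_convexHull_permMatrix] at hM'
  have hconv : Convex ℝ {M : Matrix ι ι ℝ | c ≤ ∑ i, ∑ j, M i j * (e i * d j)} := by
    intro X hX Y hY a b ha hb hab
    simp only [Set.mem_ofPred_eq] at *
    have : ∑ i, ∑ j, (a • X + b • Y) i j * (e i * d j)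
        = a * (∑ i, ∑ j, X i j * (e i * d j)) + b * (∑ i, ∑ j, Y i j * (e i * d j)) := by
      simp only [Finset.mul_sum, ← Finset.sum_add_distrib, Matrix.add_apply, Matrix.smul_apply,
        smul_eq_mul]
      exact Finset.sum_congr rfl fun i _ => Finset.sum_congr rfl fun j _ => by ring
    rw [this]
    calc c = a * c + b * c := by rw [← add_mul, hab, one_mul]
      _ ≤ _ := add_le_add (mul_le_mul_of_nonneg_left hX ha) (mul_le_mul_of_nonneg_left hY hb)
  refine convexHull_min ?_ hconv hM'
  rintro _ ⟨σ, rfl⟩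
  simp only [Set.mem_ofPred_eq]
  rw [aux_perm_sum]
  exact hc σ

theorem aux_inf {ι : Type*} [Fintype ι] [DecidableEq ι] {H : Matrix ι ι ℂ} (hH : H.IsHermitian)
    (U : Matrix.unitaryGroup ι ℂ) (d : ι → ℝ) (c : ℝ)
    (hc : ∀ σ : Equiv.Perm ι, c ≤ ∑ i, hH.eigenvalues i * d (σ i))
    (hc' : ∃ σ : Equiv.Perm ι, ∑ i, hH.eigenvalues i * d (σ i) = c)
    (ρ : Matrix ι ι ℂ)
    (hρ : ρ = (U : Matrix ι ι ℂ) * Matrix.diagonal (fun i => (d i : ℂ)) * star (U : Matrix ι ι ℂ)) :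
    (⨅ V : Matrix.unitaryGroup ι ℂ,
      (((V : Matrix ι ι ℂ) * ρ * star (V : Matrix ι ι ℂ) * H).trace).re) = c := by
  set W := hH.eigenvectorUnitary with hW
  have hHW : H = (W : Matrix ι ι ℂ) * Matrix.diagonal (fun i => (hH.eigenvalues i : ℂ))
      * star (W : Matrix ι ι ℂ) := by
    have := hH.spectral_theorem
    rw [Unitary.conjStarAlgAut_apply] at this
    exact this
  have key : ∀ V : Matrix.unitaryGroup ι ℂ,
      (((V : Matrix ι ι ℂ) * ρ * star (V : Matrix ι ι ℂ) * H).trace).re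
      = ∑ i, ∑ j, Complex.normSq (((star W * V * U : Matrix.unitaryGroup ι ℂ) : Matrix ι ι ℂ) i j)
          * (hH.eigenvalues i * d j) := by
    intro V
    rw [← aux_trace]
    congr 1
    generalize hE : Matrix.diagonal (fun i => (hH.eigenvalues i : ℂ)) = E at *
    have : (V : Matrix ι ι ℂ) * ρ * star (V : Matrix ι ι ℂ) * H
       = ((V : Matrix ι ι ℂ) * ρ * star (V : Matrix ι ι ℂ) * W * E) * star (W : Matrix ι ι ℂ) := by
      conv_lhs => rw [hHW]
      simp only [Matrix.mul_assoc]
    rw [this, Matrix.trace_mul_comm, hρ]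
    simp only [Submonoid.coe_mul, Unitary.coe_star, star_mul, star_star, Matrix.mul_assoc]
  have lb : ∀ V : Matrix.unitaryGroup ι ℂ, c ≤
      (((V : Matrix ι ι ℂ) * ρ * star (V : Matrix ι ι ℂ) * H).trace).re := by
    intro V
    rw [key]
    exact aux_ds_bound d hH.eigenvalues c hc _ (aux_ds (star W * V * U))
  apply le_antisymm
  · obtain ⟨σ, hσ⟩ := hc'
    have hP : σ.permMatrix ℂ ∈ Matrix.unitaryGroup ι ℂ := by
      rw [Matrix.mem_unitaryGroup_iff, Matrix.star_eq_conjTranspose,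
        Matrix.conjTranspose_permMatrix, ← Matrix.permMatrix_mul]
      simp
    let P : Matrix.unitaryGroup ι ℂ := ⟨_, hP⟩
    refine (ciInf_le ⟨c, by rintro _ ⟨V, rfl⟩; exact lb V⟩ (W * P * star U)).trans ?_
    rw [key]
    have : star W * (W * P * star U) * U = P := by
      rw [← mul_assoc, ← mul_assoc, Unitary.star_mul_self, one_mul, mul_assoc,
        Unitary.star_mul_self, mul_one]
    rw [this, ← hσ, ← aux_perm_sum]
    apply le_of_eq
    refine Finset.sum_congr rfl fun i _ => Finset.sum_congr rfl fun j _ => ?_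
    congr 1
    simp only [P, PEquiv.toMatrix_apply]
    split_ifs <;> simp
  · exact le_ciInf lb

theorem aux_sortUp {ι : Type*} [Fintype ι] (g : ι → ℝ) :
    ∃ e : Fin (Fintype.card ι) ≃ ι, sortUp g = g ∘ e :=
  ⟨(Tuple.sort (g ∘ (Fintype.equivFin ι).symm)).trans (Fintype.equivFin ι).symm, rfl⟩

theorem aux_sortUp_mono {ι : Type*} [Fintype ι] (g : ι → ℝ) : Monotone (sortUp g) :=
  Tuple.monotone_sort _

theorem aux_sortDown {ι : Type*} [Fintype ι] (g : ι → ℝ) :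
    ∃ e : Fin (Fintype.card ι) ≃ ι, sortDown g = g ∘ e := by
  obtain ⟨e, he⟩ := aux_sortUp g
  refine ⟨Fin.revPerm.trans e, ?_⟩
  funext i
  simp [sortDown, he]

theorem aux_rearr {ι : Type*} [Fintype ι] (e d : ι → ℝ) :
    (∀ σ : Equiv.Perm ι, ∑ k, sortUp e k * sortDown d k ≤ ∑ i, e i * d (σ i)) ∧
    ∃ σ : Equiv.Perm ι, ∑ i, e i * d (σ i) = ∑ k, sortUp e k * sortDown d k := by
  have hav : Antivary (sortUp e) (sortDown d) := by
    intro i j hij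
    apply aux_sortUp_mono
    by_contra hlt
    push Not at hlt
    exact absurd (aux_sortUp_mono d (Fin.rev_le_rev.mpr hlt.le)) (not_le.mpr hij)
  obtain ⟨e1, h1⟩ := aux_sortUp e
  obtain ⟨e2, h2⟩ := aux_sortDown d
  constructor
  · intro σ
    have := hav.sum_mul_le_sum_mul_comp_perm (σ := (e1.trans σ).trans e2.symm)
    refine this.trans (le_of_eq ?_)
    rw [← e1.sum_comp, h1, h2]
    simp
  · refine ⟨e1.symm.trans e2, ?_⟩
    rw [← e1.sum_comp, h1, h2]
    simp

theorem aux_vt_dot {n m : ℕ} (a c : Fin n → ℂ) (b d : Fin m → ℂ) :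
    star (vecTensor a b) ⬝ᵥ vecTensor c d = (star a ⬝ᵥ c) * (star b ⬝ᵥ d) := by
  simp only [dotProduct, vecTensor, Pi.star_apply, Fintype.sum_prod_type, Finset.sum_mul_sum,
    star_mul']
  exact Finset.sum_congr rfl fun i _ => Finset.sum_congr rfl fun j _ => by ring

theorem aux_kron_vt {n m : ℕ} (A : Matrix (Fin n) (Fin n) ℂ) (B : Matrix (Fin m) (Fin m) ℂ)
    (c : Fin n → ℂ) (d : Fin m → ℂ) :
    (A ⊗ₖ B) *ᵥ vecTensor c d = vecTensor (A *ᵥ c) (B *ᵥ d) := by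
  funext p
  simp only [mulVec, dotProduct, vecTensor, Fintype.sum_prod_type, Finset.sum_mul_sum,
    Matrix.kroneckerMap_apply]
  exact Finset.sum_congr rfl fun i _ => Finset.sum_congr rfl fun j _ => by ring

theorem aux_trace_ketbra {ι : Type*} [Fintype ι] (u : ι → ℂ) (H : Matrix ι ι ℂ) :
    (ketbra u * H).trace = star u ⬝ᵥ H *ᵥ u := by
  rw [ketbra, Matrix.vecMulVec_mul, Matrix.trace_vecMulVec, dotProduct_comm,
    Matrix.dotProduct_mulVec]

theorem aux_ketbra_smul {ι : Type*} (t : ℝ) (ht : 0 ≤ t) (u : ι → ℂ) :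
    ketbra (((Real.sqrt t : ℝ) : ℂ) • u) = (t : ℂ) • ketbra u := by
  ext i j
  have : (t : ℂ) = ((Real.sqrt t : ℝ) : ℂ) * ((Real.sqrt t : ℝ) : ℂ) := by
    rw [← Complex.ofReal_mul, Real.mul_self_sqrt ht]
  simp only [ketbra, Matrix.smul_apply, Matrix.vecMulVec_apply, Pi.star_apply, Pi.smul_apply,
    smul_eq_mul, star_mul', Complex.star_def, Complex.conj_ofReal]
  rw [this]
  ring

theorem aux_conj_ketbra {ι : Type*} [Fintype ι] (P : Matrix ι ι ℂ) (hP : P.IsHermitian)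
    (u : ι → ℂ) : P * ketbra u * P = ketbra (P *ᵥ u) := by
  rw [ketbra, Matrix.mul_vecMulVec, Matrix.vecMulVec_mul, ketbra, Matrix.star_mulVec, hP.eq]

theorem aux_ketbra_mulVec {ι : Type*} [Fintype ι] (u w : ι → ℂ) :
    ketbra u *ᵥ w = (star u ⬝ᵥ w) • u := by
  rw [ketbra, Matrix.vecMulVec_mulVec]
  ext i
  simp [mul_comm]

theorem aux_ketbra_herm {ι : Type*} (u : ι → ℂ) : (ketbra u).IsHermitian := by
  ext i j
  simp [ketbra, Matrix.vecMulVec_apply, mul_comm]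

theorem aux_expand {ι : Type*} [Fintype ι] {n : ℕ} (lam : Fin n → ℝ) (hlam : ∀ k, 0 ≤ lam k)
    (w : Fin n → ι → ℂ) (M : Matrix ι ι ℂ)
    (hM : ∀ k l, k ≠ l → star (w k) ⬝ᵥ M *ᵥ w l = 0) (ψ : ι → ℂ)
    (hψ : ψ = ∑ k, ((Real.sqrt (lam k) : ℝ) : ℂ) • w k) :
    star ψ ⬝ᵥ M *ᵥ ψ = ∑ k, (lam k : ℂ) * (star (w k) ⬝ᵥ M *ᵥ w k) := by
  subst hψ
  rw [star_sum, Matrix.mulVec_sum, sum_dotProduct]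
  refine Finset.sum_congr rfl fun k _ => ?_
  rw [dotProduct_sum, Finset.sum_eq_single k]
  · rw [Matrix.mulVec_smul, dotProduct_smul, star_smul, smul_dotProduct, smul_eq_mul, smul_eq_mul,
      ← mul_assoc, Complex.star_def, Complex.conj_ofReal, ← Complex.ofReal_mul,
      Real.mul_self_sqrt (hlam k)]
  · intro l _ hl
    rw [Matrix.mulVec_smul, dotProduct_smul, star_smul, smul_dotProduct, hM k l (Ne.symm hl)]
    simp
  · simp

/-- Theorem 3 of the paper: EMIN of a pure state under a non-interacting
Hamiltonian equals ∑ ε_k^↑ μ_k^↓ − ε_min ≥ 0. -/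
theorem emin_pure_state_noninteracting {n m : ℕ} (hnm : n ≤ m)
    (α : Fin n → Fin n → ℂ) (β : Fin n → Fin m → ℂ)
    (hα : ∀ k l, star (α k) ⬝ᵥ α l = if k = l then 1 else 0)
    (hβ : ∀ k l, star (β k) ⬝ᵥ β l = if k = l then 1 else 0)
    (lam : Fin n → ℝ) (hlam : ∀ k, 0 ≤ lam k) (hsum : ∑ k, lam k = 1)
    (ψ : Fin n × Fin m → ℂ)
    (hψ : ψ = ∑ k, ((Real.sqrt (lam k) : ℝ) : ℂ) • vecTensor (α k) (β k))
    {A : Matrix (Fin n) (Fin n) ℂ} {B : Matrix (Fin m) (Fin m) ℂ}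
    (hA : A.IsHermitian) (hB : B.IsHermitian)
    (H : Matrix (Fin n × Fin m) (Fin n × Fin m) ℂ)
    (hHdef : H = A ⊗ₖ (1 : Matrix (Fin m) (Fin m) ℂ)
        + (1 : Matrix (Fin n) (Fin n) ℂ) ⊗ₖ B)
    (hH : H.IsHermitian)
    -- μ is λ padded with nm − n zeros:
    (μ : Fin n × Fin m → ℝ) (f : Fin n → Fin n × Fin m) (hf : Function.Injective f)
    (hμf : ∀ k, μ (f k) = lam k) (hμ0 : ∀ p, p ∉ Set.range f → μ p = 0) :
    ergotropy (ketbra ψ) H - ergotropy (pinch (fun k => ketbra (α k)) (ketbra ψ)) H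
      = ∑ k, sortUp hH.eigenvalues k * sortDown μ k - ⨅ p, hH.eigenvalues p
    ∧ 0 ≤ ∑ k, sortUp hH.eigenvalues k * sortDown μ k - ⨅ p, hH.eigenvalues p := by
  have hn : 0 < n := by
    rcases Nat.eq_zero_or_pos n with h | h
    · subst h
      simp at hsum
    · exact h
  have hm : 0 < m := lt_of_lt_of_le hn hnm
  let p0 : Fin n × Fin m := (⟨0, hn⟩, ⟨0, hm⟩)
  haveI : Nonempty (Fin n × Fin m) := ⟨p0⟩
  let w : Fin n → Fin n × Fin m → ℂ := fun k => vecTensor (α k) (β k)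
  have hw : ∀ k l, star (w k) ⬝ᵥ w l = if k = l then 1 else 0 := by
    intro k l
    simp only [w]
    rw [aux_vt_dot, hα, hβ]
    split_ifs <;> simp
  have hHw : ∀ k l, k ≠ l → star (w k) ⬝ᵥ H *ᵥ w l = 0 := by
    intro k l hkl
    simp only [w]
    rw [hHdef, Matrix.add_mulVec, aux_kron_vt, aux_kron_vt, dotProduct_add, aux_vt_dot, aux_vt_dot,
      Matrix.one_mulVec, Matrix.one_mulVec, hα, hβ]
    simp [hkl]
  have hψw : ψ = ∑ k, ((Real.sqrt (lam k) : ℝ) : ℂ) • w k := hψ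
  have hpin : pinch (fun k => ketbra (α k)) (ketbra ψ) = ∑ k, (lam k : ℂ) • ketbra (w k) := by
    rw [pinch]
    refine Finset.sum_congr rfl fun k _ => ?_
    have hP : (ketbra (α k) ⊗ₖ (1 : Matrix (Fin m) (Fin m) ℂ)).IsHermitian := by
      rw [Matrix.IsHermitian, Matrix.conjTranspose_kronecker, (aux_ketbra_herm (α k)).eq,
        Matrix.conjTranspose_one]
    rw [aux_conj_ketbra _ hP, ← aux_ketbra_smul _ (hlam k)]
    congr 1
    rw [hψ, Matrix.mulVec_sum, Finset.sum_eq_single k]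
    · rw [Matrix.mulVec_smul, aux_kron_vt, aux_ketbra_mulVec, hα, Matrix.one_mulVec]
      simp [w]
    · intro l _ hl
      rw [Matrix.mulVec_smul, aux_kron_vt, aux_ketbra_mulVec, hα, Matrix.one_mulVec,
        if_neg (Ne.symm hl)]
      ext p
      simp [vecTensor]
    · simp
  have htr : (ketbra ψ * H).trace = (pinch (fun k => ketbra (α k)) (ketbra ψ) * H).trace := by
    rw [hpin, aux_trace_ketbra, aux_expand lam hlam w H hHw ψ hψw, Matrix.sum_mul,
      Matrix.trace_sum]
    refine Finset.sum_congr rfl fun k _ => ?_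
    rw [Matrix.smul_mul, Matrix.trace_smul, aux_trace_ketbra, smul_eq_mul]
  have hnorm : star ψ ⬝ᵥ ψ = 1 := by
    have := aux_expand lam hlam w 1 (fun k l hkl => by rw [Matrix.one_mulVec, hw, if_neg hkl]) ψ hψw
    rw [Matrix.one_mulVec] at this
    rw [this]
    simp only [Matrix.one_mulVec, hw, if_true, mul_one]
    rw [← Complex.ofReal_sum, hsum, Complex.ofReal_one]
  have hinf : ∀ p, (⨅ q, hH.eigenvalues q) ≤ hH.eigenvalues p :=
    fun p => ciInf_le (Finite.bddBelow_range _) p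
  -- the pure state
  have hpure : (⨅ V : Matrix.unitaryGroup (Fin n × Fin m) ℂ,
      (((V : Matrix _ _ ℂ) * ketbra ψ * star (V : Matrix _ _ ℂ) * H).trace).re)
      = ⨅ p, hH.eigenvalues p := by
    obtain ⟨U, hU⟩ := aux_ext_unitary (fun _ : Fin n × Fin m => ψ) {p0} (by
      rintro i rfl j rfl
      simp [hnorm])
    have hval : ∀ σ : Equiv.Perm (Fin n × Fin m),
        ∑ i, hH.eigenvalues i * (Pi.single p0 (1 : ℝ) : Fin n × Fin m → ℝ) (σ i)
          = hH.eigenvalues (σ.symm p0) := by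
      intro σ
      rw [← σ.symm.sum_comp]
      simp [Pi.single_apply]
    refine aux_inf hH U (Pi.single p0 1) _ ?_ ?_ _ ?_
    · intro σ
      rw [hval]
      exact hinf _
    · obtain ⟨q, hq⟩ := exists_eq_ciInf_of_finite (f := hH.eigenvalues)
      refine ⟨Equiv.swap q p0, ?_⟩
      rw [hval, ← hq]
      simp
    · rw [aux_diag_sum, Finset.sum_eq_single p0]
      · have : (fun x => (U : Matrix _ _ ℂ) x p0) = ψ := funext fun x => hU p0 rfl x
        rw [this]
        simp
      · intro q _ hq
        simp [hq]
      · simp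
  -- the measured state
  have hmix : (⨅ V : Matrix.unitaryGroup (Fin n × Fin m) ℂ,
      (((V : Matrix _ _ ℂ) * pinch (fun k => ketbra (α k)) (ketbra ψ)
        * star (V : Matrix _ _ ℂ) * H).trace).re)
      = ∑ k, sortUp hH.eigenvalues k * sortDown μ k := by
    obtain ⟨U, hU⟩ := aux_ext_unitary (Function.extend f w 0) (Set.range f) (by
      rintro _ ⟨k, rfl⟩ _ ⟨l, rfl⟩
      rw [hf.extend_apply, hf.extend_apply, hw]
      simp [hf.eq_iff])
    obtain ⟨h1, h2⟩ := aux_rearr hH.eigenvalues μ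
    refine aux_inf hH U μ _ h1 h2 _ ?_
    rw [aux_diag_sum, hpin]
    refine Fintype.sum_of_injective f hf _ _ ?_ ?_
    · intro p hp
      rw [hμ0 p hp]
      simp
    · intro k
      have : (fun x => (U : Matrix _ _ ℂ) x (f k)) = w k := funext fun x => by
        rw [hU (f k) ⟨k, rfl⟩ x, hf.extend_apply]
      rw [this, hμf]
  refine ⟨?_, ?_⟩
  · rw [ergotropy, ergotropy, hpure, hmix, htr]
    ring
  · obtain ⟨e1, h1⟩ := aux_sortUp hH.eigenvalues
    obtain ⟨e2, h2⟩ := aux_sortDown μ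
    have hμnn : ∀ p, 0 ≤ μ p := by
      intro p
      by_cases hp : p ∈ Set.range f
      · obtain ⟨k, rfl⟩ := hp
        rw [hμf]
        exact hlam k
      · rw [hμ0 p hp]
    have hμs : ∑ p, μ p = 1 := by
      rw [← hsum]
      exact (Fintype.sum_of_injective f hf _ _ hμ0 (fun k => (hμf k).symm)).symm
    rw [sub_nonneg, h1, h2]
    calc (⨅ p, hH.eigenvalues p) = ∑ k, (⨅ p, hH.eigenvalues p) * μ (e2 k) := by
          rw [← Finset.mul_sum, e2.sum_comp, hμs, mul_one]
      _ ≤ _ := Finset.sum_le_sum fun k _ => mul_le_mul_of_nonneg_right (hinf _) (hμnn _)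
end

section
/- Let H := A ⊗ I_m + I_n ⊗ B with A an n×n and B an m×m Hermitian matrix, let ρ be an nm×nm density matrix, and let (P_k) be a family of pairwise-orthogonal n×n orthogonal projections summing to I_n such that ∑_k P_k ρ_a P_k = ρ_a, where ρ_a is the n×n matrix with entries (ρ_a)_{i i'} = ∑_j ρ_{(i,j),(i',j)}. Then the measurement preserves the energy: Tr(Π(ρ) H) = Tr(ρ H), where Π(ρ) := ∑_k (P_k ⊗ I_m) ρ (P_k ⊗ I_m). -/
open scoped BigOperators ComplexOrder
open Matrix Kronecker

/-- Tr(ρ (X ⊗ I)) = Tr(ρ_a X). -/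
theorem trace_mul_kron_one {n m : ℕ} (ρ : Matrix (Fin n × Fin m) (Fin n × Fin m) ℂ)
    (X : Matrix (Fin n) (Fin n) ℂ) :
    (ρ * (X ⊗ₖ (1 : Matrix (Fin m) (Fin m) ℂ))).trace = (marginalA ρ * X).trace := by
  simp only [Matrix.trace, Matrix.diag, Matrix.mul_apply, Fintype.sum_prod_type, marginalA,
    Matrix.of_apply, Matrix.kroneckerMap_apply, Matrix.one_apply, mul_ite, mul_one, mul_zero,
    Finset.sum_ite_eq', Finset.sum_ite_eq, Finset.mem_univ, if_true, Finset.sum_mul]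
  refine Finset.sum_congr rfl fun i _ => ?_
  exact Finset.sum_comm

/-- a locally invariant measurement preserves the energy for
non-interacting Hamiltonians. -/
theorem pinch_preserves_energy_noninteracting {n m : ℕ}
    {A : Matrix (Fin n) (Fin n) ℂ} {B : Matrix (Fin m) (Fin m) ℂ}
    (hA : A.IsHermitian) (hB : B.IsHermitian)
    (H : Matrix (Fin n × Fin m) (Fin n × Fin m) ℂ)
    (hHdef : H = A ⊗ₖ (1 : Matrix (Fin m) (Fin m) ℂ)
        + (1 : Matrix (Fin n) (Fin n) ℂ) ⊗ₖ B)
    {ρ : Matrix (Fin n × Fin m) (Fin n × Fin m) ℂ}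
    (hρ : ρ.PosSemidef) (hρtr : ρ.trace = 1)
    {K : Type*} [Fintype K] (P : K → Matrix (Fin n) (Fin n) ℂ)
    (hPherm : ∀ k, (P k)ᴴ = P k) (hPidem : ∀ k, P k * P k = P k)
    (hPorth : ∀ k l, k ≠ l → P k * P l = 0)
    (hPsum : ∑ k, P k = (1 : Matrix (Fin n) (Fin n) ℂ))
    (hPinv : ∑ k, P k * marginalA ρ * P k = marginalA ρ) :
    (pinch P ρ * H).trace = (ρ * H).trace := by
  subst hHdef
  have key : ∀ k, ((P k ⊗ₖ (1 : Matrix (Fin m) (Fin m) ℂ)) * ρ *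
      (P k ⊗ₖ (1 : Matrix (Fin m) (Fin m) ℂ)) *
      (A ⊗ₖ (1 : Matrix (Fin m) (Fin m) ℂ) + (1 : Matrix (Fin n) (Fin n) ℂ) ⊗ₖ B)).trace
      = (P k * marginalA ρ * P k * A).trace + (ρ * (P k ⊗ₖ B)).trace := by
    intro k
    rw [Matrix.mul_assoc, Matrix.mul_assoc, Matrix.trace_mul_comm, Matrix.mul_assoc,
      Matrix.mul_add, Matrix.add_mul, Matrix.mul_add, Matrix.trace_add]
    simp only [← Matrix.mul_kronecker_mul, Matrix.mul_one, Matrix.one_mul, hPidem]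
    rw [trace_mul_kron_one, ← Matrix.mul_assoc, Matrix.trace_mul_comm]
    simp only [Matrix.mul_assoc]
  have hsum : ∑ k, P k ⊗ₖ B = (1 : Matrix (Fin n) (Fin n) ℂ) ⊗ₖ B := by
    rw [← hPsum]
    ext a b
    simp [Matrix.sum_apply, Finset.sum_mul]
  rw [pinch, Finset.sum_mul, Matrix.trace_sum, Finset.sum_congr rfl fun k _ => key k,
    Finset.sum_add_distrib, ← Matrix.trace_sum, ← Matrix.trace_sum, ← Finset.sum_mul, hPinv,
    ← Finset.mul_sum, hsum, Matrix.mul_add, Matrix.trace_add, trace_mul_kron_one]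
end

section
/- (Ergotropic gap of product states under an entangled-ground-state Hamiltonian) Let H be an nm×nm Hermitian matrix (indexed by pairs) with smallest eigenvalue ε_0, and suppose that ⟨u ⊗ v, H (u ⊗ v)⟩ > ε_0 for every pair of unit vectors u ∈ ℂ^n, v ∈ ℂ^m, where (u ⊗ v)_{(i,j)} := u_i v_j. Then for every pair of unit vectors u_0 ∈ ℂ^n, v_0 ∈ ℂ^m, the pure product state ρ := |u_0 ⊗ v_0⟩⟨u_0 ⊗ v_0| satisfies ξ(ρ,H) > ξ^l(ρ,H), i.e., the ergotropic gap δ(ρ) = ξ(ρ,H) − ξ^l(ρ,H) is strictly positive. -/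
open scoped BigOperators ComplexOrder
open Matrix Kronecker

lemma trace_conj_ketbra {ι : Type*} [Fintype ι] [DecidableEq ι] (V H : Matrix ι ι ℂ) (w : ι → ℂ) :
    (V * ketbra w * star V * H).trace = star (V.mulVec w) ⬝ᵥ H.mulVec (V.mulVec w) := by
  unfold ketbra
  rw [Matrix.mul_vecMulVec, Matrix.star_eq_conjTranspose, Matrix.vecMulVec_mul,
    Matrix.vecMulVec_mul, Matrix.trace_vecMulVec, ← Matrix.star_mulVec, dotProduct_comm,
    ← Matrix.dotProduct_mulVec]

lemma kron_mulVec_vecTensor {n m : ℕ} (U : Matrix (Fin n) (Fin n) ℂ) (V : Matrix (Fin m) (Fin m) ℂ)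
    (u : Fin n → ℂ) (v : Fin m → ℂ) :
    (U ⊗ₖ V).mulVec (vecTensor u v) = vecTensor (U.mulVec u) (V.mulVec v) := by
  ext ⟨i, j⟩
  simp only [vecTensor, Matrix.mulVec, dotProduct, Matrix.kroneckerMap_apply,
    Fintype.sum_prod_type, Finset.sum_mul_sum]
  refine Finset.sum_congr rfl fun a _ => Finset.sum_congr rfl fun b _ => ?_
  ring

lemma unit_mulVec {ι : Type*} [Fintype ι] [DecidableEq ι] (V : Matrix.unitaryGroup ι ℂ) (w : ι → ℂ)
    (hw : star w ⬝ᵥ w = 1) :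
    star ((V : Matrix ι ι ℂ).mulVec w) ⬝ᵥ ((V : Matrix ι ι ℂ).mulVec w) = 1 := by
  have h : (V : Matrix ι ι ℂ)ᴴ * (V : Matrix ι ι ℂ) = 1 := Matrix.UnitaryGroup.star_mul_self V
  rw [Matrix.star_mulVec, ← Matrix.dotProduct_mulVec, Matrix.mulVec_mulVec, h, Matrix.one_mulVec, hw]

lemma vecTensor_unit {n m : ℕ} (u : Fin n → ℂ) (v : Fin m → ℂ)
    (hu : star u ⬝ᵥ u = 1) (hv : star v ⬝ᵥ v = 1) :
    star (vecTensor u v) ⬝ᵥ vecTensor u v = 1 := by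
  have : star (vecTensor u v) ⬝ᵥ vecTensor u v = (star u ⬝ᵥ u) * (star v ⬝ᵥ v) := by
    simp only [vecTensor, dotProduct, Fintype.sum_prod_type, Finset.sum_mul_sum, Pi.star_apply,
      star_mul']
    refine Finset.sum_congr rfl fun a _ => Finset.sum_congr rfl fun b _ => ?_
    ring
  rw [this, hu, hv, one_mul]

lemma isCompact_unit {ι : Type*} [Fintype ι] : IsCompact {u : ι → ℂ | star u ⬝ᵥ u = 1} := by
  refine Metric.isCompact_of_isClosed_isBounded ?_ ?_
  · refine isClosed_eq ?_ continuous_const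
    unfold dotProduct
    simp only [Pi.star_apply]
    fun_prop
  · refine (Metric.isBounded_closedBall (x := (0 : ι → ℂ)) (r := 1)).subset ?_
    intro u hu
    rw [mem_closedBall_zero_iff, pi_norm_le_iff_of_nonneg zero_le_one]
    intro i
    have h1 : ∑ j, ‖u j‖ ^ 2 = 1 := by
      have h2 := congrArg Complex.re (show star u ⬝ᵥ u = 1 from hu)
      simp only [dotProduct, Pi.star_apply, Complex.re_sum, Complex.one_re] at h2
      rw [← h2]
      refine Finset.sum_congr rfl fun j _ => ?_
      rw [← Complex.normSq_eq_norm_sq, Complex.normSq_apply]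
      simp
    have h3 : ‖u i‖ ^ 2 ≤ ∑ j, ‖u j‖ ^ 2 :=
      Finset.single_le_sum (f := fun j => ‖u j‖ ^ 2) (fun j _ => sq_nonneg _) (Finset.mem_univ i)
    nlinarith [norm_nonneg (u i)]

lemma continuous_energy {ι : Type*} [Fintype ι] (H : Matrix ι ι ℂ) :
    Continuous fun w : ι → ℂ => (star w ⬝ᵥ H.mulVec w).re := by
  unfold Matrix.mulVec dotProduct
  simp only [Pi.star_apply]
  fun_prop

lemma exists_unitary_col {ι : Type*} [Fintype ι] [DecidableEq ι] (w : ι → ℂ)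
    (hw : star w ⬝ᵥ w = 1) (p : ι) :
    ∃ U : Matrix.unitaryGroup ι ℂ, (U : Matrix ι ι ℂ).mulVec (Pi.single p 1) = w := by
  have ho : Orthonormal ℂ (({p} : Set ι).domRestrict fun _ => (WithLp.toLp 2 w : EuclideanSpace ℂ ι)) := by
    constructor
    · intro i
      have : inner ℂ (WithLp.toLp 2 w : EuclideanSpace ℂ ι) (WithLp.toLp 2 w) = 1 := by
        rw [EuclideanSpace.inner_toLp_toLp, dotProduct_comm, hw]
      rw [inner_self_eq_norm_sq_to_K] at this
      have h2 : ‖(WithLp.toLp 2 w : EuclideanSpace ℂ ι)‖ ^ 2 = 1 := by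
        apply Complex.ofReal_injective
        simpa using this
      change ‖(WithLp.toLp 2 w : EuclideanSpace ℂ ι)‖ = 1
      exact (pow_eq_one_iff_of_nonneg (norm_nonneg _) two_ne_zero).1 h2
    · intro i j hij
      exact absurd (Subsingleton.elim i j) hij
  obtain ⟨b, hb⟩ := ho.exists_orthonormalBasis_extension_of_card_eq (by simp)
  refine ⟨⟨(EuclideanSpace.basisFun ι ℂ).toBasis.toMatrix b,
    OrthonormalBasis.toMatrix_orthonormalBasis_mem_unitary _ _⟩, ?_⟩
  ext i
  simp [Module.Basis.toMatrix_apply, hb p rfl]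

/-- if every product state has energy strictly above the ground energy,
then every pure product state has strictly positive ergotropic gap. -/
theorem product_state_positive_ergotropicGap {n m : ℕ}
    {H : Matrix (Fin n × Fin m) (Fin n × Fin m) ℂ} (hH : H.IsHermitian)
    (hground : ∀ (u : Fin n → ℂ) (v : Fin m → ℂ),
      star u ⬝ᵥ u = 1 → star v ⬝ᵥ v = 1 →
      (⨅ p, hH.eigenvalues p) <
        (star (vecTensor u v) ⬝ᵥ H.mulVec (vecTensor u v)).re)
    (u₀ : Fin n → ℂ) (v₀ : Fin m → ℂ)
    (hu₀ : star u₀ ⬝ᵥ u₀ = 1) (hv₀ : star v₀ ⬝ᵥ v₀ = 1) :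
    localErgotropy (ketbra (vecTensor u₀ v₀)) H
      < ergotropy (ketbra (vecTensor u₀ v₀)) H := by
  classical
  set w := vecTensor u₀ v₀ with hwdef
  have hw : star w ⬝ᵥ w = 1 := vecTensor_unit u₀ v₀ hu₀ hv₀
  have hne : Nonempty (Fin n × Fin m) := by
    by_contra h
    rw [not_nonempty_iff] at h
    simp [dotProduct] at hw
  obtain ⟨p, hp⟩ := exists_eq_ciInf_of_finite (f := hH.eigenvalues)
  -- the minimum over product vectors
  obtain ⟨⟨u, v⟩, ⟨hu, hv⟩, hmin⟩ :=
    ((isCompact_unit (ι := Fin n)).prod (isCompact_unit (ι := Fin m))).exists_isMinOn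
      ⟨(u₀, v₀), hu₀, hv₀⟩
      (f := fun q : (Fin n → ℂ) × (Fin m → ℂ) =>
        (star (vecTensor q.1 q.2) ⬝ᵥ H.mulVec (vecTensor q.1 q.2)).re)
      (((continuous_energy H).comp (by unfold vecTensor; fun_prop)).continuousOn)
  have hlt := hground u v hu hv
  have hloc : (star (vecTensor u v) ⬝ᵥ H.mulVec (vecTensor u v)).re ≤
      ⨅ W : Matrix.unitaryGroup (Fin n) ℂ × Matrix.unitaryGroup (Fin m) ℂ,
      ((((W.1 : Matrix (Fin n) (Fin n) ℂ) ⊗ₖ (W.2 : Matrix (Fin m) (Fin m) ℂ)) * ketbra w *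
        star ((W.1 : Matrix (Fin n) (Fin n) ℂ) ⊗ₖ (W.2 : Matrix (Fin m) (Fin m) ℂ))
          * H).trace).re := by
    refine le_ciInf fun W => ?_
    rw [trace_conj_ketbra, hwdef, kron_mulVec_vecTensor]
    exact isMinOn_iff.1 hmin (W.1.1.mulVec u₀, W.2.1.mulVec v₀)
      (Set.mk_mem_prod (unit_mulVec W.1 u₀ hu₀) (unit_mulVec W.2 v₀ hv₀))
  have hbdd : BddBelow (Set.range fun V : Matrix.unitaryGroup (Fin n × Fin m) ℂ =>
      (((V : Matrix (Fin n × Fin m) (Fin n × Fin m) ℂ) * ketbra w *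
        star (V : Matrix (Fin n × Fin m) (Fin n × Fin m) ℂ) * H).trace).re) := by
    obtain ⟨c, hc⟩ := (isCompact_unit (ι := Fin n × Fin m)).bddBelow_image
      (continuous_energy H).continuousOn
    refine ⟨c, ?_⟩
    rintro _ ⟨V, rfl⟩
    have h1 := hc (Set.mem_image_of_mem _ (show _ ∈ {x | star x ⬝ᵥ x = 1} from unit_mulVec V w hw))
    simp only [trace_conj_ketbra]
    exact h1
  obtain ⟨U, hU⟩ := exists_unitary_col w hw p
  have hUw : (star U : Matrix.unitaryGroup (Fin n × Fin m) ℂ).1.mulVec w = Pi.single p 1 := by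
    have h : star (U : Matrix (Fin n × Fin m) (Fin n × Fin m) ℂ) * U.1 = 1 :=
      Matrix.UnitaryGroup.star_mul_self U
    rw [← hU, Matrix.mulVec_mulVec]
    change (star (U : Matrix (Fin n × Fin m) (Fin n × Fin m) ℂ) * U.1).mulVec _ = _
    rw [h, Matrix.one_mulVec]
  have hglob := ciInf_le hbdd (hH.eigenvectorUnitary * star U)
  have hval : (((hH.eigenvectorUnitary * star U : Matrix.unitaryGroup (Fin n × Fin m) ℂ) :
      Matrix (Fin n × Fin m) (Fin n × Fin m) ℂ)).mulVec w = ⇑(hH.eigenvectorBasis p) := by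
    change (hH.eigenvectorUnitary.1 * (star U : Matrix.unitaryGroup (Fin n × Fin m) ℂ).1).mulVec w = _
    rw [← Matrix.mulVec_mulVec, hUw]
    exact hH.eigenvectorUnitary_mulVec p
  have hunit := unit_mulVec (hH.eigenvectorUnitary * star U) w hw
  simp only [trace_conj_ketbra] at hglob
  rw [hval] at hglob hunit
  rw [hH.mulVec_eigenvectorBasis, dotProduct_smul, hunit, hp] at hglob
  simp only [Complex.real_smul, mul_one, Complex.ofReal_re] at hglob
  simp only [← trace_conj_ketbra] at hglob
  unfold localErgotropy ergotropy
  linarith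
end
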